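/- For every prime ℓ ≥ 5, there exists an integer m with 0 ≤ m < (ℓ² − 1)/24 such that the partition number p(ℓm + δ_ℓ) is odd, where 0 < δ_ℓ < ℓ and 24·δ_ℓ ≡ 1 (mod ℓ). -/

import Mathlib

/-- The partition function: the number of partitions of `n`. -/
def partitionFn (n : ℕ) : ℕ := Fintype.card (Nat.Partition n)

/-! Let `e = ∏ (1 - qⁿ)`, `P = ∑ p(n) qⁿ = 1 / e` and `Δ = q e²⁴`, and write `ℓ² = 24 d + 1`. The
product of `η(z) ^ (8 ℓ)` and the trace of `η(ℓ z) ^ (-8)` to level one is a modular form of weight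
`4 (ℓ - 1)` with integral `q`-expansion, so modulo 2 it is a polynomial in `Δ` of degree at most
`(ℓ - 1) / 3`. Modulo 2 it is also the eighth power of `e ^ ℓ (P(q ^ ℓ) + U(q ^ d P))`, where `U`
keeps the exponents divisible by `ℓ`. Hence `e ^ ℓ (P(q ^ ℓ) + U(q ^ d P)) = S(Δ)` for a polynomial
`S` over `𝔽₂` with `24 deg S < ℓ`.

The series `U(q ^ d P)` is `q ^ k ∑ p(ℓ m + δ) q ^ m` with `k = (δ + d) / ℓ ≥ ℓ / 24`. If these
partition numbers are even for all `m < ℓ / 24`, then `S(Δ)` agrees with `e ^ ℓ` beyond the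
exponent `2 deg S + 1`. This is impossible: with `θ = q d/dq` and `L = ∑ σ(n) qⁿ`, modulo 2 we have
`θ Δ = Δ`, `θ e = L e` and `L² + L = Δ`, so `y = e ^ ℓ` solves `θ y = L y`. For `y = S(Δ)` the
product of `θ y + L y` with its conjugate under `L ↦ L + 1` is a nonzero polynomial in `Δ` of
degree at most `2 deg S + 1`, which bounds the order of vanishing of `θ y + L y`. -/

open PowerSeries
open scoped Polynomial
open Function.Periodic Filter UpperHalfPlane ModularForm MatrixGroups

instance charP_powerSeries {R : Type*} [CommSemiring R] {p : ℕ} [CharP R p] : CharP R⟦X⟧ p :=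
  charP_of_injective_ringHom C_injective p

section Uniformizer

variable {K : Type*} [Field K] {u : K⟦X⟧}

theorem constantCoeff_aeval_X_mul (u : K⟦X⟧) (Q : K[X]) :
    constantCoeff (Polynomial.aeval (X * u) Q) = Q.coeff 0 := by
  rw [Polynomial.aeval_def, Polynomial.hom_eval₂]
  simp [Polynomial.eval₂_at_zero]

theorem le_natDegree_of_X_pow_dvd_aeval (hu : IsUnit u) {Q : K[X]} (hQ : Q ≠ 0) {N : ℕ}
    (h : X ^ N ∣ Polynomial.aeval (X * u) Q) : N ≤ Q.natDegree := by
  obtain ⟨Q₁, hQQ₁, hQ₁⟩ := Polynomial.exists_eq_pow_rootMultiplicity_mul_and_not_dvd Q hQ 0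
  set k := Q.rootMultiplicity 0
  rw [map_zero, sub_zero] at hQQ₁ hQ₁
  have hunit : IsUnit (Polynomial.aeval (X * u) Q₁) := by
    rw [isUnit_iff_constantCoeff, constantCoeff_aeval_X_mul, isUnit_iff_ne_zero]
    rwa [Polynomial.X_dvd_iff] at hQ₁
  have hdvd : (X : K⟦X⟧) ^ N ∣ X ^ k := by
    rw [hQQ₁, map_mul, map_pow, Polynomial.aeval_X, mul_pow, mul_assoc] at h
    exact ((hu.pow k).mul hunit).dvd_mul_right.1 h
  calc N ≤ k := (pow_dvd_pow_iff X_ne_zero X_prime.not_isUnit).1 hdvd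
    _ = (Polynomial.X ^ k : K[X]).natDegree := (Polynomial.natDegree_X_pow k).symm
    _ ≤ Q.natDegree := Polynomial.natDegree_le_of_dvd ⟨Q₁, hQQ₁⟩ hQ

theorem aeval_X_mul_injective (hu : IsUnit u) :
    Function.Injective (Polynomial.aeval (R := K) (X * u)) := by
  refine (injective_iff_map_eq_zero _).2 fun Q hQ ↦ by_contra fun hQ0 ↦ ?_
  have h := le_natDegree_of_X_pow_dvd_aeval hu hQ0 (N := Q.natDegree + 1) (hQ ▸ dvd_zero _)
  lia

theorem derivative_X_mul_ne_zero (hu : IsUnit u) : derivative K (X * u) ≠ 0 := fun h ↦ by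
  have h0 := congrArg constantCoeff h
  simp only [Derivation.leibniz, derivative_X, smul_eq_mul, map_add, map_mul, constantCoeff_X,
    zero_mul, zero_add, mul_one, map_zero] at h0
  exact (isUnit_iff_constantCoeff.1 hu).ne_zero h0

end Uniformizer

section Frobenius

variable {p : ℕ} [Fact p.Prime]

theorem pow_prime_eq_expand (f : (ZMod p)⟦X⟧) : f ^ p = f.expand p (NeZero.ne p) := by
  have h := MvPowerSeries.map_frobenius_expand p (NeZero.ne p)
    (f := (f : MvPowerSeries Unit (ZMod p)))
  rw [ZMod.frobenius_zmod, MvPowerSeries.map_id] at h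
  exact h.symm

theorem pow_prime_pow_eq_expand (n : ℕ) (f : (ZMod p)⟦X⟧) :
    f ^ p ^ n = f.expand (p ^ n) (NeZero.ne _) := by
  induction n with
  | zero => simp
  | succ n ih =>
    calc f ^ p ^ (n + 1) = (f ^ p ^ n) ^ p := by rw [pow_succ, pow_mul]
      _ = (f.expand (p ^ n) (NeZero.ne _)).expand p (NeZero.ne _) := by
        rw [ih, pow_prime_eq_expand]
      _ = f.expand (p ^ (n + 1)) (NeZero.ne _) := by simp_rw [← expand_mul, pow_succ']

theorem pow_prime_injective : Function.Injective fun f : (ZMod p)⟦X⟧ ↦ f ^ p := fun f g h ↦ by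
  simp only [pow_prime_eq_expand] at h
  rw [← sub_eq_zero, ← map_sub, ← pow_prime_eq_expand] at h
  exact sub_eq_zero.1 (pow_eq_zero_iff (NeZero.ne p) |>.1 h)

variable {u : (ZMod p)⟦X⟧}

theorem exists_eq_pow_of_aeval_eq_pow (hu : IsUnit u) {R : (ZMod p)[X]} {g : (ZMod p)⟦X⟧}
    (h : Polynomial.aeval (X * u) R = g ^ p) :
    ∃ S : (ZMod p)[X], R = S ^ p ∧ Polynomial.aeval (X * u) S = g := by
  have hR : Polynomial.derivative R = 0 := by
    refine aeval_X_mul_injective hu ?_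
    have h' := congrArg (derivative (ZMod p)) h
    rw [Derivation.map_aeval, Derivation.leibniz_pow, ← Nat.cast_smul_eq_nsmul (ZMod p),
      CharP.cast_eq_zero, zero_smul, smul_eq_mul, mul_eq_zero] at h'
    rw [map_zero, h'.resolve_right (derivative_X_mul_ne_zero hu)]
  have hpow : R = R.contract p ^ p := by
    rw [← ZMod.expand_card, Polynomial.expand_contract p hR (NeZero.ne p)]
  refine ⟨R.contract p, hpow, pow_prime_injective ?_⟩
  beta_reduce
  rw [← h, ← map_pow, ← hpow]

theorem exists_eq_pow_pow_of_aeval_eq_pow_pow (hu : IsUnit u) (n : ℕ) {R : (ZMod p)[X]}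
    {g : (ZMod p)⟦X⟧} (h : Polynomial.aeval (X * u) R = g ^ p ^ n) :
    ∃ S : (ZMod p)[X], R = S ^ p ^ n ∧ Polynomial.aeval (X * u) S = g := by
  induction n generalizing R with
  | zero => exact ⟨R, by simp, by simpa using h⟩
  | succ n ih =>
    rw [pow_succ, pow_mul] at h
    obtain ⟨R₁, rfl, hR₁⟩ := exists_eq_pow_of_aeval_eq_pow hu h
    obtain ⟨S, rfl, hS⟩ := ih hR₁
    exact ⟨S, by rw [pow_succ, pow_mul], hS⟩

end Frobenius

section Derivative

variable {R : Type*} [CommRing R] {f : R⟦X⟧}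

theorem eq_zero_of_forall_X_pow_dvd (h : ∀ N : ℕ, X ^ N ∣ f) : f = 0 := by
  ext n
  exact X_pow_dvd_iff.1 (h (n + 1)) n n.lt_succ_self

theorem X_pow_dvd_X_mul_derivative {N : ℕ} (h : X ^ N ∣ f) : X ^ N ∣ X * derivative R f := by
  rw [X_pow_dvd_iff] at h ⊢
  rintro (_ | n) hn
  · simp
  · rw [coeff_succ_X_mul, coeff_derivative, h _ hn, zero_mul]

end Derivative

section Partition

variable (R : Type*) [CommRing R]

/-- The generating function `∑ p(n) Xⁿ` of the partition numbers. -/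
noncomputable def partitionSeries : R⟦X⟧ := .mk fun n ↦ (partitionFn n : R)

/-- The generating function `∑ σₖ(n) Xⁿ` of the divisor sums. -/
noncomputable def sigmaSeries (k : ℕ) : R⟦X⟧ := .mk fun n ↦ (ArithmeticFunction.sigma k n : R)

/-- The expansion `X ∏ (1 - Xⁿ)²⁴` of the modular discriminant. -/
noncomputable def deltaSeries : R⟦X⟧ := X * pentagonalSeries R ^ 24

variable {R} {S : Type*} [CommRing S] (f : R →+* S)

theorem map_partitionSeries : map f (partitionSeries R) = partitionSeries S := by
  ext; simp [partitionSeries]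

theorem map_sigmaSeries (k : ℕ) : map f (sigmaSeries R k) = sigmaSeries S k := by
  ext; simp [sigmaSeries]

theorem map_pentagonalSeries : map f (pentagonalSeries R) = pentagonalSeries S := by
  ext n
  obtain ⟨s, hR, hS⟩ := ((coeff_prod_one_sub_X_pow_eventually_eq R n).and
    (coeff_prod_one_sub_X_pow_eventually_eq S n)).exists
  rw [← hS, coeff_map, ← hR, ← coeff_map, map_prod]
  simp

theorem map_deltaSeries : map f (deltaSeries R) = deltaSeries S := by
  simp [deltaSeries, map_pentagonalSeries]

variable (R)

open scoped PowerSeries.WithPiTopology in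
theorem partitionSeries_mul_pentagonalSeries : partitionSeries R * pentagonalSeries R = 1 := by
  rw [← map_partitionSeries (Int.castRingHom R), ← map_pentagonalSeries (Int.castRingHom R),
    ← map_mul, ← map_one (PowerSeries.map (Int.castRingHom R))]
  congr 1
  let : TopologicalSpace ℤ := ⊥
  have : DiscreteTopology ℤ := ⟨rfl⟩
  have h := (Nat.Partition.hasProd_powerSeriesMk_card_restricted ℤ (fun _ ↦ True)).mul
    (WithPiTopology.hasProd_one_sub_X_pow ℤ)
  simp only [Nat.Partition.restricted, Finset.filter_true_of_mem, if_true, implies_true,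
    Finset.card_univ] at h
  refine h.unique ?_
  convert! hasProd_one using 2 with i
  simp_rw [pow_mul]
  exact WithPiTopology.tsum_pow_mul_one_sub_of_constantCoeff_eq_zero (by simp)

theorem constantCoeff_pentagonalSeries : constantCoeff (pentagonalSeries R) = 1 := by
  obtain ⟨s, hs⟩ := (coeff_prod_one_sub_X_pow_eventually_eq R 0).exists
  rw [← coeff_zero_eq_constantCoeff_apply, ← hs, coeff_zero_eq_constantCoeff_apply, map_prod]
  simp

theorem isUnit_pentagonalSeries : IsUnit (pentagonalSeries R) :=
  .of_mul_eq_one_right _ (partitionSeries_mul_pentagonalSeries R)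

theorem constantCoeff_partitionSeries : constantCoeff (partitionSeries R) = 1 := by
  simpa [constantCoeff_pentagonalSeries] using
    congrArg constantCoeff (partitionSeries_mul_pentagonalSeries R)

/-- The Lambert series `∑ n Xⁿʲ` over `j ≥ 1`, which is `-X` times the logarithmic derivative of
`1 - Xⁿ`. -/
noncomputable def lambertSeries (n : ℕ) : R⟦X⟧ := .mk fun m ↦ if n ∈ m.divisors then (n : R) else 0

theorem one_sub_X_pow_mul_lambertSeries {n : ℕ} (hn : n ≠ 0) :
    (1 - X ^ n) * lambertSeries R n = C (n : R) * X ^ n := by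
  ext m
  rw [sub_mul, one_mul, map_sub, coeff_X_pow_mul', coeff_C_mul, coeff_X_pow, lambertSeries]
  simp only [coeff_mk, Nat.mem_divisors]
  rcases lt_trichotomy m n with h | rfl | h
  · have hdvd : ¬ (n ∣ m ∧ m ≠ 0) := fun ⟨hd, h0⟩ ↦
      h.not_ge (Nat.le_of_dvd (Nat.pos_of_ne_zero h0) hd)
    simp [h.ne, h.not_ge, hdvd]
  · simp [hn]
  · have hdvd : n ∣ m - n ↔ n ∣ m := by rw [Nat.dvd_sub_iff_left h.le dvd_rfl]
    simp [h.le, h.ne', hdvd, show m - n ≠ 0 by lia, show m ≠ 0 by lia]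

theorem X_mul_derivative_one_sub_X_pow {n : ℕ} (hn : n ≠ 0) :
    X * derivative R (1 - X ^ n) = -(lambertSeries R n * (1 - X ^ n)) := by
  rw [mul_comm (lambertSeries R n), one_sub_X_pow_mul_lambertSeries R hn, map_sub,
    Derivation.map_one_eq_zero, zero_sub, Derivation.leibniz_pow, derivative_X]
  obtain ⟨n, rfl⟩ := Nat.exists_eq_succ_of_ne_zero hn
  simp only [Nat.succ_eq_add_one, add_tsub_cancel_right, map_natCast, nsmul_eq_mul, smul_eq_mul]
  ring

theorem X_mul_derivative_prod_one_sub_X_pow (s : Finset ℕ) :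
    X * derivative R (∏ n ∈ s, (1 - X ^ (n + 1))) =
      -((∑ n ∈ s, lambertSeries R (n + 1)) * ∏ n ∈ s, (1 - X ^ (n + 1))) := by
  induction s using Finset.induction_on with
  | empty => simp
  | insert a s ha ih =>
    rw [Finset.prod_insert ha, Finset.sum_insert ha, Derivation.leibniz, smul_eq_mul, smul_eq_mul]
    linear_combination (1 - X ^ (a + 1)) * ih +
      (∏ n ∈ s, (1 - X ^ (n + 1))) * X_mul_derivative_one_sub_X_pow R (Nat.add_one_ne_zero a)

theorem X_pow_dvd_sigmaSeries_one_sub_sum {s : Finset ℕ} {N : ℕ} (hs : Finset.range N ⊆ s) :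
    X ^ N ∣ sigmaSeries R 1 - ∑ n ∈ s, lambertSeries R (n + 1) := by
  refine X_pow_dvd_iff.2 fun m hm ↦ ?_
  rw [map_sub, sub_eq_zero, map_sum]
  simp only [lambertSeries, sigmaSeries, coeff_mk, ArithmeticFunction.sigma_one_apply,
    Nat.cast_sum]
  rw [← Finset.sum_filter]
  symm
  refine Finset.sum_bij (fun n _ ↦ n + 1) (by simp) (by simp) (fun d hd ↦ ?_) (by simp)
  have hpos := Nat.pos_of_mem_divisors hd
  have hle := Nat.divisor_le hd
  exact ⟨d - 1, Finset.mem_filter.2 ⟨hs (Finset.mem_range.2 (by lia)),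
    by rwa [Nat.sub_add_cancel hpos]⟩, by lia⟩

theorem X_mul_derivative_pentagonalSeries :
    X * derivative R (pentagonalSeries R) = -(sigmaSeries R 1 * pentagonalSeries R) := by
  rw [← sub_eq_zero]
  refine eq_zero_of_forall_X_pow_dvd fun N ↦ ?_
  obtain ⟨s, hs, hprod⟩ := ((Filter.eventually_ge_atTop (Finset.range N)).and
    ((Filter.eventually_all_finset (Finset.range N)).2 fun i _ ↦
      coeff_prod_one_sub_X_pow_eventually_eq R i)).exists
  set P : R⟦X⟧ := ∏ n ∈ s, (1 - X ^ (n + 1))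
  have hP : X ^ N ∣ pentagonalSeries R - P :=
    X_pow_dvd_iff.2 fun i hi ↦ by rw [map_sub, hprod i (Finset.mem_range.2 hi), sub_self]
  have hsum := X_pow_dvd_sigmaSeries_one_sub_sum R hs
  have hθP := X_mul_derivative_prod_one_sub_X_pow R s
  convert! ((X_pow_dvd_X_mul_derivative hP).add (hP.mul_left (sigmaSeries R 1))).add
    (hsum.mul_right P) using 1
  rw [map_sub, mul_sub, hθP]
  ring

end Partition

section QExpansion

/-- `f`, on the upper half plane, is the sum of the power series `a` in `q = exp (2πiz)`. Such
functions are taken on all of `ℂ`, so that they can be composed with affine maps. -/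
def HasQExpansion (f : ℂ → ℂ) (a : ℂ⟦X⟧) : Prop :=
  ∀ z : ℂ, 0 < z.im → HasSum (fun n ↦ coeff n a * qParam 1 z ^ n) (f z)

namespace HasQExpansion

variable {f g : ℂ → ℂ} {a b : ℂ⟦X⟧}

theorem congr (hf : HasQExpansion f a) (h : ∀ z : ℂ, 0 < z.im → g z = f z) : HasQExpansion g a :=
  fun z hz ↦ (h z hz).symm ▸ hf z hz

theorem add (hf : HasQExpansion f a) (hg : HasQExpansion g b) :
    HasQExpansion (fun z ↦ f z + g z) (a + b) :=
  fun z hz ↦ by simpa [add_mul] using (hf z hz).add (hg z hz)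

theorem sub (hf : HasQExpansion f a) (hg : HasQExpansion g b) :
    HasQExpansion (fun z ↦ f z - g z) (a - b) :=
  fun z hz ↦ by simpa [sub_mul] using (hf z hz).sub (hg z hz)

theorem const_mul (hf : HasQExpansion f a) (c : ℂ) : HasQExpansion (fun z ↦ c * f z) (C c * a) :=
  fun z hz ↦ by simpa [mul_assoc] using (hf z hz).mul_left c

theorem mul (hf : HasQExpansion f a) (hg : HasQExpansion g b) :
    HasQExpansion (fun z ↦ f z * g z) (a * b) := fun z hz ↦ by
  have hfn := (hf z hz).summable.norm
  have hgn := (hg z hz).summable.norm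
  have hsum := (summable_norm_sum_mul_antidiagonal_of_summable_norm hfn hgn).of_norm.hasSum
  rw [← tsum_mul_tsum_eq_tsum_sum_antidiagonal_of_summable_norm hfn hgn, (hf z hz).tsum_eq,
    (hg z hz).tsum_eq] at hsum
  convert! hsum using 2 with n
  rw [coeff_mul, Finset.sum_mul]
  refine Finset.sum_congr rfl fun x hx ↦ ?_
  rw [← Finset.HasAntidiagonal.mem_antidiagonal.1 hx, pow_add]
  ring

theorem monomial (n : ℕ) (c : ℂ) :
    HasQExpansion (fun z ↦ c * qParam 1 z ^ n) (PowerSeries.monomial n c) := fun z _ ↦ by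
  simpa [coeff_monomial] using
    hasSum_single (f := fun m ↦ coeff m (PowerSeries.monomial n c) * qParam 1 z ^ m) n
      fun m hm ↦ by simp [coeff_monomial, hm]

theorem one : HasQExpansion (fun _ ↦ 1) 1 := by
  simpa using! monomial 0 1

theorem qParam_pow (n : ℕ) : HasQExpansion (fun z ↦ qParam 1 z ^ n) (X ^ n) := by
  simpa [X_pow_eq] using! monomial n 1

theorem pow (hf : HasQExpansion f a) (n : ℕ) : HasQExpansion (fun z ↦ f z ^ n) (a ^ n) := by
  induction n with
  | zero => simpa using! one
  | succ n ih => simpa [pow_succ] using! ih.mul hf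

theorem summable (hf : HasQExpansion f a) {q : ℂ} (hq : ‖q‖ < 1) :
    Summable fun n ↦ coeff n a * q ^ n := by
  rcases eq_or_ne q 0 with rfl | hq0
  · exact (hasSum_single 0 fun m hm ↦ by simp [hm]).summable
  · rw [← qParam_right_inv one_ne_zero hq0]
    exact (hf _ (im_invQParam_pos_of_norm_lt_one one_pos hq hq0)).summable

theorem differentiableOn_tsum (hf : HasQExpansion f a) :
    DifferentiableOn ℂ (fun q ↦ ∑' n, coeff n a * q ^ n) (Metric.ball 0 1) := by
  have h : HasFPowerSeriesOnBall (fun q : ℂ ↦ ∑' n, coeff n a * q ^ n)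
      (.ofScalars ℂ fun n ↦ coeff n a) 0 1 := by
    refine ⟨le_of_forall_lt_imp_le_of_dense fun r hr ↦ ?_, one_pos, fun {q} hq ↦ ?_⟩
    · lift r to NNReal using hr.ne_top
      refine FormalMultilinearSeries.le_radius_of_summable _ ?_
      simpa [mul_comm] using (hf.summable (q := (r : ℂ)) (by simpa using hr)).norm
    · rw [← ENNReal.coe_one, Metric.eball_coe, NNReal.coe_one, mem_ball_zero_iff] at hq
      simpa [mul_comm] using! (hf.summable hq).hasSum
  simpa only [← ENNReal.coe_one, Metric.eball_coe, NNReal.coe_one] using h.differentiableOn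

theorem differentiableOn (hf : HasQExpansion f a) : DifferentiableOn ℂ f {z | 0 < z.im} :=
  (hf.differentiableOn_tsum.comp differentiable_qParam.differentiableOn fun z hz ↦ by
    simpa using norm_qParam_lt_one one_pos hz).congr fun z hz ↦ (hf z hz).tsum_eq.symm

theorem of_differentiableOn {F : ℂ → ℂ} (hF : DifferentiableOn ℂ F (Metric.ball 0 1)) :
    HasQExpansion (fun z ↦ F (qParam 1 z))
      (.mk fun n ↦ (n.factorial : ℂ)⁻¹ * iteratedDeriv n F 0) := fun z hz ↦ by
  have h := Complex.hasSum_taylorSeries_on_ball hF (z := qParam 1 z)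
    (by simpa using norm_qParam_lt_one one_pos hz)
  simpa [mul_right_comm, mul_assoc, mul_comm] using! h

theorem eq_zero (h : HasQExpansion (fun _ ↦ 0) a) : a = 0 := by
  ext n
  rw [ModularFormClass.qExpansion_coeff_unique (f := (0 : ModularForm 𝒮ℒ 0))
      (c := fun n ↦ coeff n a) one_pos one_mem_strictPeriods_SL
      fun τ ↦ by simpa using h τ τ.im_pos,
    FunLike.coe_zero, UpperHalfPlane.qExpansion_zero]

theorem unique (ha : HasQExpansion f a) (hb : HasQExpansion f b) : a = b :=
  sub_eq_zero.1 (HasQExpansion.eq_zero (by simpa using ha.sub hb))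

theorem inv (hf : HasQExpansion f a) (hf0 : ∀ z : ℂ, 0 < z.im → f z ≠ 0) (hab : a * b = 1) :
    HasQExpansion (fun z ↦ (f z)⁻¹) b := by
  have hF : ∀ q ∈ Metric.ball (0 : ℂ) 1, ∑' n, coeff n a * q ^ n ≠ 0 := by
    intro q hq
    rw [mem_ball_zero_iff] at hq
    rcases eq_or_ne q 0 with rfl | hq0
    · rw [tsum_eq_single 0 fun m hm ↦ by simp [hm], pow_zero, mul_one,
        coeff_zero_eq_constantCoeff_apply]
      exact (isUnit_iff_constantCoeff.1 (.of_mul_eq_one b hab)).ne_zero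
    · rw [← qParam_right_inv one_ne_zero hq0]
      have him := im_invQParam_pos_of_norm_lt_one one_pos hq hq0
      rw [(hf _ him).tsum_eq]
      exact hf0 _ him
  have hinv := (of_differentiableOn (hf.differentiableOn_tsum.fun_inv hF)).congr
    (g := fun z ↦ (f z)⁻¹) fun z hz ↦ by rw [(hf z hz).tsum_eq]
  have hmul := (hf.mul hinv).unique (one.congr fun z hz ↦ mul_inv_cancel₀ (hf0 z hz))
  rwa [left_inv_eq_right_inv ((mul_comm b a).trans hab) hmul]

theorem expand {p : ℕ} (hp : p ≠ 0) (hf : HasQExpansion f a) :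
    HasQExpansion (fun z ↦ f (p * z)) (a.expand p hp) := fun z hz ↦ by
  have him : 0 < ((p : ℂ) * z).im := by simpa using mul_pos (Nat.cast_pos.2 hp.bot_lt) hz
  have hq : qParam 1 (p * z) = qParam 1 z ^ p := by
    simp only [qParam, ← Complex.exp_nat_mul]
    ring_nf
  rw [← (mul_right_injective₀ hp).hasSum_iff fun n hn ↦ by
    rw [coeff_expand_of_not_dvd _ _ _ fun ⟨m, hm⟩ ↦ hn ⟨m, hm.symm⟩, zero_mul]]
  convert hf _ him using 2 with n
  simp [hq, pow_mul]

end HasQExpansion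

/-- The `U`-operator `∑ aₙ Xⁿ ↦ ∑ aₗₘ Xᵐ` on power series. -/
noncomputable def atkinU {R : Type*} [Semiring R] (ℓ : ℕ) (a : R⟦X⟧) : R⟦X⟧ :=
  .mk fun m ↦ coeff (ℓ * m) a

theorem map_atkinU {R S : Type*} [Semiring R] [Semiring S] (f : R →+* S) (ℓ : ℕ) (a : R⟦X⟧) :
    map f (atkinU ℓ a) = atkinU ℓ (map f a) := by
  ext; simp [atkinU]

theorem atkinU_expand {R : Type*} [CommRing R] {ℓ n : ℕ} (h : ℓ.Coprime n) (hn : n ≠ 0)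
    (a : R⟦X⟧) : atkinU ℓ (a.expand n hn) = (atkinU ℓ a).expand n hn := by
  ext m
  simp only [atkinU, coeff_mk, coeff_expand, h.symm.dvd_mul_left]
  split_ifs with hm
  · rw [Nat.mul_div_assoc _ hm]
  · rfl

theorem sum_pow_pow_of_isPrimitiveRoot {R : Type*} [CommRing R] [IsDomain R] {ℓ : ℕ} {ζ : R}
    (hζ : IsPrimitiveRoot ζ ℓ) (n : ℕ) :
    ∑ i ∈ Finset.range ℓ, (ζ ^ i) ^ n = if ℓ ∣ n then (ℓ : R) else 0 := by
  simp_rw [pow_right_comm ζ _ n]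
  split_ifs with h
  · simp [(hζ.pow_eq_one_iff_dvd n).2 h]
  · refine (mul_eq_zero.1 ?_).resolve_right
      (sub_ne_zero.2 fun h' ↦ h ((hζ.pow_eq_one_iff_dvd n).1 h'))
    rw [geom_sum_mul, pow_right_comm, hζ.pow_eq_one, one_pow, sub_self]

theorem HasQExpansion.sum_div {f : ℂ → ℂ} {a : ℂ⟦X⟧} (hf : HasQExpansion f a) {ℓ b : ℕ}
    (hℓ : ℓ ≠ 0) (hb : b.Coprime ℓ) :
    HasQExpansion (fun z ↦ ∑ i ∈ Finset.range ℓ, f ((z + b * i) / ℓ)) (ℓ * atkinU ℓ a) :=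
  fun z hz ↦ by
    have hℓ' : (ℓ : ℂ) ≠ 0 := Nat.cast_ne_zero.2 hℓ
    have hζ := Complex.isPrimitiveRoot_exp_of_coprime b ℓ hℓ hb
    set ζ := Complex.exp (2 * Real.pi * Complex.I * (b / ℓ))
    have hq (i : ℕ) : qParam 1 ((z + b * i) / ℓ) = ζ ^ i * qParam 1 (z / ℓ) := by
      simp only [ζ, qParam, ← Complex.exp_nat_mul, ← Complex.exp_add]
      congr 1
      push_cast
      field_simp
      ring
    have hqpow : qParam 1 (z / ℓ) ^ ℓ = qParam 1 z := by
      simp only [qParam, ← Complex.exp_nat_mul]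
      congr 1
      push_cast
      field_simp
    have him (i : ℕ) : 0 < ((z + b * i) / ℓ).im := by
      have : ((z + b * i) / ℓ).im = z.im / ℓ := by
        rw [Complex.div_natCast_im]
        simp
      rw [this]
      positivity
    have hsum := hasSum_sum fun i (_ : i ∈ Finset.range ℓ) ↦ hf _ (him i)
    have hterm (n : ℕ) : ∑ i ∈ Finset.range ℓ, coeff n a * qParam 1 ((z + b * i) / ℓ) ^ n =
        if ℓ ∣ n then ℓ * (coeff n a * qParam 1 (z / ℓ) ^ n) else 0 := by
      simp_rw [hq, mul_pow, ← Finset.mul_sum, ← Finset.sum_mul,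
        sum_pow_pow_of_isPrimitiveRoot hζ, ite_mul, zero_mul, mul_ite, mul_zero]
      split_ifs <;> ring
    simp_rw [hterm] at hsum
    rw [← (mul_right_injective₀ hℓ).hasSum_iff fun n hn ↦
      if_neg fun ⟨m, hm⟩ ↦ hn ⟨m, hm.symm⟩] at hsum
    convert! hsum using 2 with m
    simp [atkinU, pow_mul, hqpow, mul_assoc, ← map_natCast (C (R := ℂ)), -map_natCast]

theorem tendstoLocallyUniformlyOn_iterate_deriv {ι : Type*} {l : Filter ι} {F : ι → ℂ → ℂ}
    {f : ℂ → ℂ} {U : Set ℂ} (hU : IsOpen U) (h : TendstoLocallyUniformlyOn F f l U)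
    (hF : ∀ᶠ i in l, DifferentiableOn ℂ (F i) U) (n : ℕ) :
    TendstoLocallyUniformlyOn (fun i ↦ deriv^[n] (F i)) (deriv^[n] f) l U := by
  induction n generalizing F f with
  | zero => exact h
  | succ _ ih => exact ih (h.deriv hF hU) (hF.mono fun i hi ↦ hi.deriv hU)

theorem iterate_deriv_eval (P : Polynomial ℂ) (n : ℕ) :
    deriv^[n] (fun q ↦ P.eval q) = fun q ↦ (Polynomial.derivative^[n] P).eval q := by
  induction n generalizing P with
  | zero => rfl
  | succ n ih => simpa [← ih] using! congrArg (deriv^[n]) (funext fun q ↦ P.deriv (x := q))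

theorem hasQExpansion_of_tendstoLocallyUniformlyOn {ι : Type*} {l : Filter ι} [l.NeBot]
    {P : ι → Polynomial ℂ} {F : ℂ → ℂ} {a : ℂ⟦X⟧}
    (hF : TendstoLocallyUniformlyOn (fun i q ↦ (P i).eval q) F l (Metric.ball 0 1))
    (ha : ∀ n, ∀ᶠ i in l, (P i).coeff n = coeff n a) :
    HasQExpansion (fun z ↦ F (qParam 1 z)) a := by
  have hdiff : ∀ᶠ i in l, DifferentiableOn ℂ (fun q ↦ (P i).eval q) (Metric.ball 0 1) :=
    .of_forall fun i ↦ (P i).differentiable.differentiableOn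
  convert HasQExpansion.of_differentiableOn (hF.differentiableOn hdiff Metric.isOpen_ball)
  ext n
  have hlim := (tendstoLocallyUniformlyOn_iterate_deriv Metric.isOpen_ball hF hdiff n).tendsto_at
    (Metric.mem_ball_self one_pos)
  have hderiv : ∀ᶠ i in l, deriv^[n] (fun q ↦ (P i).eval q) 0 = n.factorial * coeff n a := by
    filter_upwards [ha n] with i hi
    simp only [iterate_deriv_eval, ← Polynomial.coeff_zero_eq_eval_zero,
      Polynomial.coeff_iterate_derivative, zero_add, Nat.descFactorial_self, hi, nsmul_eq_mul]
  rw [coeff_mk, iteratedDeriv_eq_iterate, tendsto_nhds_unique_of_eventuallyEq hlim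
    tendsto_const_nhds hderiv, inv_mul_cancel_left₀ (Nat.cast_ne_zero.2 n.factorial_ne_zero)]

theorem hasQExpansion_tprod_one_sub_eta_q :
    HasQExpansion (fun z ↦ ∏' n, (1 - ModularForm.eta_q n z)) (pentagonalSeries ℂ) := by
  refine hasQExpansion_of_tendstoLocallyUniformlyOn (l := atTop)
    (P := fun s : Finset ℕ ↦ ∏ n ∈ s, (1 - Polynomial.X ^ (n + 1)))
    (F := fun q ↦ ∏' n, (1 - q ^ (n + 1))) ?_ fun n ↦ ?_
  · simpa [Polynomial.eval_prod] using!
      ModularForm.multipliableLocallyUniformlyOn_one_sub_pow.hasProdLocallyUniformlyOn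
  · filter_upwards [coeff_prod_one_sub_X_pow_eventually_eq ℂ n] with s hs
    rw [← hs, ← Polynomial.coeff_coe, ← Polynomial.coeToPowerSeries.ringHom_apply, map_prod]
    simp

theorem HasQExpansion.exists_modularForm {f : ℂ → ℂ} {a : ℂ⟦X⟧} (hf : HasQExpansion f a) {k : ℤ}
    (hS : ∀ τ : ℍ, f (-(τ : ℂ))⁻¹ = (τ : ℂ) ^ k * f τ) :
    ∃ g : ModularForm 𝒮ℒ k, qExpansion 1 g = a := by
  have hfS : (fun τ : ℍ ↦ f τ) ∣[k] ModularGroup.S = fun τ : ℍ ↦ f τ := by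
    ext τ
    rw [SlashInvariantForm.slash_S_apply, zpow_neg]
    exact mul_inv_eq_iff_eq_mul₀ (zpow_ne_zero k (ne_zero τ)) |>.2 ((hS τ).trans (mul_comm _ _))
  have hfT : (fun τ : ℍ ↦ f τ) ∣[k] ModularGroup.T = fun τ : ℍ ↦ f τ := by
    ext τ
    rw [ModularForm.SL_slash_apply, modular_T_smul, ModularGroup.denom_apply]
    have := (hf _ ((1 : ℝ) +ᵥ τ).im_pos).unique
      (by simpa [qParam, mul_add, Complex.exp_add] using hf τ τ.im_pos)
    simpa [ModularGroup.T] using this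
  have hsum (τ : ℍ) : HasSum (fun n ↦ coeff n a • qParam 1 (τ : ℂ) ^ n) (f τ) := hf τ τ.im_pos
  let g : ModularForm 𝒮ℒ k :=
    { toFun := fun τ ↦ f τ
      slash_action_eq' := by
        rintro _ ⟨γ, rfl⟩
        exact SlashInvariantForm.slash_action_generators_SL2Z hfS hfT γ
      holo' := UpperHalfPlane.mdifferentiable_iff.2 <| hf.differentiableOn.congr fun z hz ↦ by
        simp [ofComplex_apply_of_im_pos hz]
      bdd_at_cusps' := fun hc ↦ by
        rw [Subgroup.IsArithmetic.isCusp_iff_isCusp_SL2Z] at hc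
        rw [OnePoint.isBoundedAt_iff_forall_SL2Z hc]
        intro γ _
        rw [SlashInvariantForm.slash_action_generators_SL2Z hfS hfT]
        exact isBoundedAtImInfty_of_hasSum_qExpansion one_pos hsum }
  exact ⟨g, by
    ext n
    exact (ModularFormClass.qExpansion_coeff_unique (f := g) one_pos one_mem_strictPeriods_SL
      hsum n).symm⟩

end QExpansion

section LevelOne

theorem eta_pow_twentyFour_eq (z : ℂ) :
    eta z ^ 24 = qParam 1 z * (∏' n, (1 - eta_q n z)) ^ 24 := by
  rw [eta, mul_pow, qParam, qParam, ← Complex.exp_nat_mul]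
  congr 2
  push_cast
  ring

theorem qExpansion_discriminant : qExpansion 1 discriminant = deltaSeries ℂ := by
  have hΔ := (HasQExpansion.qParam_pow 1).mul (hasQExpansion_tprod_one_sub_eta_q.pow 24)
  ext n
  rw [← CuspForm.coe_discriminant, deltaSeries, ← pow_one X]
  refine (ModularFormClass.qExpansion_coeff_unique (f := CuspForm.discriminant) one_pos
    (c := fun n ↦ coeff n (X ^ 1 * pentagonalSeries ℂ ^ 24)) one_mem_strictPeriods_SL
    (fun τ ↦ ?_) n).symm
  rw [CuspForm.coe_discriminant, discriminant, eta_pow_twentyFour_eq, ← pow_one (qParam 1 _)]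
  simpa using hΔ τ τ.im_pos

theorem qExpansion_E₄ : qExpansion 1 E₄ = 1 + 240 * sigmaSeries ℂ 3 := by
  have hb : bernoulli 4 = -1 / 30 := by
    rw [bernoulli_eq_bernoulli'_of_ne_one (by decide), bernoulli'_four]
  ext n
  rw [EisensteinSeries.E_qExpansion_coeff _ (by decide), hb, ← map_ofNat (C : ℂ →+* ℂ⟦X⟧) 240,
    map_add, coeff_C_mul, coeff_one, sigmaSeries, coeff_mk]
  split_ifs with h
  · simp [h]
  · norm_num

theorem qExpansion_E₆ : qExpansion 1 E₆ = 1 - 504 * sigmaSeries ℂ 5 := by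
  have hb₅ : bernoulli' 5 = 0 := bernoulli'_eq_zero_of_odd (by decide) (by decide)
  have hb : bernoulli 6 = 1 / 42 := by
    rw [bernoulli_eq_bernoulli'_of_ne_one (by decide), bernoulli'_def]
    norm_num [Finset.sum_range_succ, Nat.choose, bernoulli'_four, hb₅]
  ext n
  rw [EisensteinSeries.E_qExpansion_coeff _ (by decide), hb, ← map_ofNat (C : ℂ →+* ℂ⟦X⟧) 504,
    map_sub, coeff_C_mul, coeff_one, sigmaSeries, coeff_mk]
  split_ifs with h
  · simp [h]
  · norm_num

theorem E₄_cube_sub_E₆_sq (R : Type*) [CommRing R] :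
    (1 + 240 * sigmaSeries R 3) ^ 3 - (1 - 504 * sigmaSeries R 5) ^ 2 = 1728 * deltaSeries R := by
  have hC : (1 + 240 * sigmaSeries ℂ 3) ^ 3 - (1 - 504 * sigmaSeries ℂ 5) ^ 2 =
      1728 * deltaSeries ℂ := by
    have hfun : (E₄.pow 3 : ℍ → ℂ) - E₆.pow 2 = (1728 : ℂ) • CuspForm.discriminant := by
      rw [ModularForm.coe_pow, ModularForm.coe_pow]
      ext τ
      simp [discriminant_eq_E₄_cube_sub_E₆_sq, mul_div_cancel₀]
    have h := congrArg (qExpansion 1) hfun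
    rwa [ModularForm.qExpansion_sub one_pos one_mem_strictPeriods_SL,
      ModularForm.qExpansion_pow one_pos one_mem_strictPeriods_SL,
      ModularForm.qExpansion_pow one_pos one_mem_strictPeriods_SL, qExpansion_E₄, qExpansion_E₆,
      ModularForm.qExpansion_smul one_pos one_mem_strictPeriods_SL, CuspForm.coe_discriminant,
      qExpansion_discriminant, smul_eq_C_mul, map_ofNat] at h
  have hZ : (1 + 240 * sigmaSeries ℤ 3) ^ 3 - (1 - 504 * sigmaSeries ℤ 5) ^ 2 =
      1728 * deltaSeries ℤ := by
    refine map_injective (Int.castRingHom ℂ) Int.cast_injective ?_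
    simpa only [map_add, map_sub, map_mul, map_pow, map_one, map_ofNat, map_sigmaSeries,
      map_deltaSeries] using hC
  simpa only [map_add, map_sub, map_mul, map_pow, map_one, map_ofNat, map_sigmaSeries,
    map_deltaSeries] using congrArg (PowerSeries.map (Int.castRingHom R)) hZ

theorem exists_eq_deltaSeries_mul {R : Type*} [CommRing R] (φ : R →+* ℂ) {k : ℤ}
    {f : ModularForm 𝒮ℒ k} {a : R⟦X⟧} (hf : qExpansion 1 f = map φ a) (ha : constantCoeff a = 0) :
    ∃ b, a = deltaSeries R * b ∧ ∃ g : ModularForm 𝒮ℒ (k - 12), qExpansion 1 g = map φ b := by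
  obtain ⟨b, rfl⟩ := X_dvd_iff.2 ha
  have hΔ : deltaSeries R * (b * partitionSeries R ^ 24) = X * b := by
    rw [deltaSeries]
    linear_combination X * b * congrArg (· ^ 24) (partitionSeries_mul_pentagonalSeries R)
  have hf0 : coeff 0 (qExpansion 1 f) = 0 := by rw [hf]; simp
  have hdiv := qExpansion_eq_qExpansion_discriminant_mul f hf0
  rw [hf, qExpansion_discriminant, ← hΔ, map_mul, map_deltaSeries] at hdiv
  have hΔ0 : deltaSeries ℂ ≠ 0 :=
    mul_ne_zero X_ne_zero (pow_ne_zero _ (isUnit_pentagonalSeries ℂ).ne_zero)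
  exact ⟨_, hΔ.symm, _, (mul_left_cancel₀ hΔ0 hdiv).symm⟩

theorem exists_eq_sum_mul_deltaSeries_pow (w : ℕ) (f : ModularForm 𝒮ℒ (4 * w)) {a : ℤ⟦X⟧}
    (hf : qExpansion 1 f = map (Int.castRingHom ℂ) a) :
    ∃ c : ℕ → ℤ, a = ∑ i ∈ Finset.range (w / 3 + 1),
      C (c i) * (1 + 240 * sigmaSeries ℤ 3) ^ (w - 3 * i) * deltaSeries ℤ ^ i := by
  induction w using Nat.strong_induction_on generalizing a with
  | _ w ih =>
  set e : ℤ⟦X⟧ := 1 + 240 * sigmaSeries ℤ 3 with he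
  set a₀ := constantCoeff a
  let f₀ : ModularForm 𝒮ℒ (4 * w) := f - (a₀ : ℂ) • (E₄.pow w).mcast (mul_comm _ _)
  have hf₀ : qExpansion 1 f₀ = map (Int.castRingHom ℂ) (a - C a₀ * e ^ w) := by
    rw [FunLike.coe_sub, ModularForm.qExpansion_sub one_pos one_mem_strictPeriods_SL, hf,
      FunLike.coe_smul, ModularForm.qExpansion_smul one_pos one_mem_strictPeriods_SL,
      ModularForm.coe_mcast, ModularForm.qExpansion_pow one_pos one_mem_strictPeriods_SL,
      qExpansion_E₄, smul_eq_C_mul]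
    simp [he, map_sigmaSeries, map_ofNat (PowerSeries.map _)]
  have he0 : constantCoeff e = 1 := by simp [he, sigmaSeries]
  obtain ⟨b, hb, g, hg⟩ := exists_eq_deltaSeries_mul _ hf₀ (by simp [he0, a₀])
  rw [sub_eq_iff_eq_add'] at hb
  rcases lt_or_ge w 3 with hw | hw
  · have hb0 : b = 0 := by
      refine map_injective (Int.castRingHom ℂ) Int.cast_injective ?_
      rw [← hg, ModularFormClass.levelOne_neg_weight_eq_zero (by lia) g, qExpansion_zero, map_zero]
    exact ⟨fun _ ↦ a₀, by simp [hb, hb0, Nat.div_eq_of_lt hw]⟩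
  · have hk : 4 * (w : ℤ) - 12 = 4 * (w - 3 : ℕ) := by lia
    obtain ⟨c, hc⟩ := ih (w - 3) (by lia) (g.mcast hk) hg
    refine ⟨fun i ↦ i.casesOn a₀ c, ?_⟩
    rw [hb, show w / 3 = (w - 3) / 3 + 1 by lia, Finset.sum_range_succ', hc, Finset.mul_sum,
      add_comm]
    simp [pow_succ', Nat.sub_sub, mul_add, add_comm, mul_left_comm]

theorem C_dvd_sigmaSeries_sub {m : ℤ} {k l : ℕ} (h : ∀ d : ℤ, m ∣ d ^ k - d ^ l) :
    C m ∣ sigmaSeries ℤ k - sigmaSeries ℤ l := by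
  have hσ (n : ℕ) : m ∣ coeff n (sigmaSeries ℤ k - sigmaSeries ℤ l) := by
    simp only [sigmaSeries, map_sub, coeff_mk, ArithmeticFunction.sigma_apply, Nat.cast_sum,
      Nat.cast_pow, ← Finset.sum_sub_distrib]
    exact Finset.dvd_sum fun d _ ↦ h d
  choose c hc using hσ
  exact ⟨.mk c, by ext n; rw [hc, coeff_C_mul, coeff_mk]⟩

theorem sigmaSeries_zmod_eq {m k l : ℕ} (h : ∀ d : ZMod m, d ^ k = d ^ l) :
    sigmaSeries (ZMod m) k = sigmaSeries (ZMod m) l := by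
  ext n
  simp [sigmaSeries, ArithmeticFunction.sigma_apply, h]

theorem sigmaSeries_one_sq_add_sigmaSeries_one :
    sigmaSeries (ZMod 2) 1 ^ 2 + sigmaSeries (ZMod 2) 1 = deltaSeries (ZMod 2) := by
  -- Eliminating `σ₅` through `σ₅ ≡ σ₃ [ZMOD 24]` makes 1728 a visible factor of `E₄ ^ 3 - E₆ ^ 2`.
  have h₅₃ (d : ℤ) : 24 ∣ d ^ 5 - d ^ 3 := by
    have hd : ∀ x : ZMod 24, x ^ 5 - x ^ 3 = 0 := by decide
    exact (ZMod.intCast_zmod_eq_zero_iff_dvd _ 24).1 (by exact_mod_cast hd d)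
  obtain ⟨c, hc⟩ := C_dvd_sigmaSeries_sub h₅₃
  have := CharP.charP_to_charZero ℤ⟦X⟧
  set A := sigmaSeries ℤ 3 with hA
  have hZ : A ^ 2 + A = deltaSeries ℤ +
      2 * (-7 * c + 24 * A ^ 2 - 4000 * A ^ 3 + 3528 * A * c + 42336 * c ^ 2) := by
    have hEis := E₄_cube_sub_E₆_sq ℤ
    rw [eq_add_of_sub_eq' hc, show (C (24 : ℤ) : ℤ⟦X⟧) = 24 from map_ofNat C 24] at hEis
    refine mul_left_cancel₀ (OfNat.ofNat_ne_zero 1728) ?_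
    linear_combination hEis
  have h₃₁ : sigmaSeries (ZMod 2) 3 = sigmaSeries (ZMod 2) 1 := sigmaSeries_zmod_eq (by decide)
  have h := congrArg (PowerSeries.map (Int.castRingHom (ZMod 2))) hZ
  rwa [map_add, map_add, map_pow, hA, map_sigmaSeries, h₃₁, map_deltaSeries, map_mul, map_ofNat,
    (CharTwo.two_eq_zero : (2 : (ZMod 2)⟦X⟧) = 0), zero_mul, add_zero] at h

theorem exists_aeval_deltaSeries_eq {w : ℕ} (f : ModularForm 𝒮ℒ (4 * w)) {a : ℤ⟦X⟧}
    (hf : qExpansion 1 f = map (Int.castRingHom ℂ) a) :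
    ∃ R : (ZMod 2)[X], 3 * R.natDegree ≤ w ∧
      Polynomial.aeval (deltaSeries (ZMod 2)) R = map (Int.castRingHom (ZMod 2)) a := by
  obtain ⟨c, rfl⟩ := exists_eq_sum_mul_deltaSeries_pow w f hf
  refine ⟨∑ i ∈ Finset.range (w / 3 + 1), .monomial i (c i : ZMod 2), ?_, ?_⟩
  · have hdeg : (∑ i ∈ Finset.range (w / 3 + 1),
        Polynomial.monomial i (c i : ZMod 2)).natDegree ≤ w / 3 :=
      Polynomial.natDegree_sum_le_of_forall_le _ _ fun i hi ↦
        (Polynomial.natDegree_monomial_le _).trans (by grind)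
    lia
  · have h240 : (240 : (ZMod 2)⟦X⟧) = 0 := by
      simpa using (CharP.cast_eq_zero_iff (ZMod 2)⟦X⟧ 2 240).2 (by decide)
    simp [Polynomial.aeval_monomial, map_deltaSeries, map_ofNat (PowerSeries.map _), h240]

end LevelOne

section DifferentialEquation

theorem natDegree_X_mul_derivative_sq_add_le {R : Type*} [CommRing R] (S : R[X]) :
    (Polynomial.X * S.derivative ^ 2 + S * S.derivative).natDegree ≤ 2 * S.natDegree - 1 := by
  by_cases h0 : S.natDegree = 0
  · simp [Polynomial.derivative_of_natDegree_zero h0]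
  have hlt := Polynomial.natDegree_derivative_lt h0
  refine Polynomial.natDegree_add_le_of_degree_le ?_ ?_
  · refine Polynomial.natDegree_mul_le_of_le Polynomial.natDegree_X_le
      (Polynomial.natDegree_pow_le_of_le 2 (Polynomial.natDegree_derivative_le S)) |>.trans ?_
    lia
  · exact Polynomial.natDegree_mul_le.trans (by lia)

theorem eq_zero_of_X_mul_derivative_sq_add {R : Type*} [CommRing R] [NoZeroDivisors R] {S : R[X]}
    (h : Polynomial.X * S.derivative ^ 2 + S * S.derivative + S ^ 2 = 0) : S = 0 := by
  by_contra hS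
  by_cases h0 : S.natDegree = 0
  · simp [Polynomial.derivative_of_natDegree_zero h0, hS] at h
  have hle := natDegree_X_mul_derivative_sq_add_le S
  rw [eq_neg_of_add_eq_zero_left h, Polynomial.natDegree_neg, Polynomial.natDegree_pow] at hle
  lia

theorem X_mul_derivative_deltaSeries_zmod_two :
    X * derivative (ZMod 2) (deltaSeries (ZMod 2)) = deltaSeries (ZMod 2) := by
  have h24 : ((24 : ℕ) : (ZMod 2)⟦X⟧) = 0 := (CharP.cast_eq_zero_iff _ 2 24).2 (by decide)
  rw [deltaSeries, Derivation.leibniz, Derivation.leibniz_pow, derivative_X,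
    ← Nat.cast_smul_eq_nsmul (ZMod 2)⟦X⟧, h24, zero_smul, smul_zero, zero_add, smul_eq_mul,
    mul_one]

theorem X_mul_derivative_aeval_deltaSeries (S : (ZMod 2)[X]) :
    X * derivative (ZMod 2) (Polynomial.aeval (deltaSeries (ZMod 2)) S) =
      Polynomial.aeval (deltaSeries (ZMod 2)) (Polynomial.X * S.derivative) := by
  rw [Derivation.map_aeval, smul_eq_mul, mul_left_comm, X_mul_derivative_deltaSeries_zmod_two,
    map_mul, Polynomial.aeval_X, mul_comm]

theorem X_mul_derivative_pentagonalSeries_pow {R : Type*} [CommRing R] (n : ℕ) :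
    X * derivative R (pentagonalSeries R ^ n) =
      -((n : R⟦X⟧) * sigmaSeries R 1 * pentagonalSeries R ^ n) := by
  induction n with
  | zero => simp
  | succ n ih =>
    rw [pow_succ, Derivation.leibniz, smul_eq_mul, smul_eq_mul]
    push_cast
    linear_combination pentagonalSeries R ^ n * X_mul_derivative_pentagonalSeries R +
      pentagonalSeries R * ih

theorem X_pow_dvd_X_mul_derivative_add_sigmaSeries_mul {ℓ N : ℕ} (hℓ : Odd ℓ) {y : (ZMod 2)⟦X⟧}
    (h : X ^ N ∣ y - pentagonalSeries (ZMod 2) ^ ℓ) :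
    X ^ N ∣ X * derivative (ZMod 2) y + sigmaSeries (ZMod 2) 1 * y := by
  have hℓ1 : (ℓ : (ZMod 2)⟦X⟧) = 1 :=
    natCast_eq_one_of_odd_of_two_eq_zero hℓ CharTwo.two_eq_zero
  have hθ := X_mul_derivative_pentagonalSeries_pow (R := ZMod 2) ℓ
  convert! (X_pow_dvd_X_mul_derivative h).add (h.mul_left (sigmaSeries (ZMod 2) 1)) using 1
  rw [map_sub, mul_sub, hθ, hℓ1]
  ring

/-- The second factor is the conjugate of the first under `L ↦ L + 1`, the nontrivial automorphism
of `L ^ 2 + L = Δ` over `𝔽₂(Δ)`, which is why the product is a polynomial in `Δ`. -/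
theorem X_mul_derivative_aeval_deltaSeries_factorization (S : (ZMod 2)[X]) :
    letI y := Polynomial.aeval (deltaSeries (ZMod 2)) S
    letI z := X * derivative (ZMod 2) y + sigmaSeries (ZMod 2) 1 * y
    z * (z + y) = Polynomial.aeval (deltaSeries (ZMod 2))
      (Polynomial.X * (Polynomial.X * S.derivative ^ 2 + S * S.derivative + S ^ 2)) := by
  have h2 : (2 : (ZMod 2)⟦X⟧) = 0 := CharTwo.two_eq_zero
  rw [X_mul_derivative_aeval_deltaSeries]
  simp only [map_mul, map_add, map_pow, Polynomial.aeval_X]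
  set Δ := deltaSeries (ZMod 2)
  set L := sigmaSeries (ZMod 2) 1
  set y := Polynomial.aeval Δ S
  set y' := Polynomial.aeval Δ S.derivative
  linear_combination y ^ 2 * sigmaSeries_one_sq_add_sigmaSeries_one + Δ * y' * L * y * h2

theorem le_of_X_pow_dvd_aeval_deltaSeries_sub {ℓ N : ℕ} (hℓ : Odd ℓ) {S : (ZMod 2)[X]}
    (h : X ^ N ∣ Polynomial.aeval (deltaSeries (ZMod 2)) S - pentagonalSeries (ZMod 2) ^ ℓ) :
    N ≤ 2 * S.natDegree + 1 := by
  by_contra! hN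
  set T := Polynomial.X * S.derivative ^ 2 + S * S.derivative + S ^ 2 with hT
  have hdvd : X ^ N ∣ Polynomial.aeval (deltaSeries (ZMod 2)) (Polynomial.X * T) := by
    rw [← X_mul_derivative_aeval_deltaSeries_factorization]
    exact (X_pow_dvd_X_mul_derivative_add_sigmaSeries_mul hℓ h).mul_right _
  have hdeg : (Polynomial.X * T).natDegree ≤ 2 * S.natDegree + 1 := by
    have hle := natDegree_X_mul_derivative_sq_add_le S
    rw [add_comm (2 * _)]
    exact Polynomial.natDegree_mul_le_of_le Polynomial.natDegree_X_le
      (Polynomial.natDegree_add_le_of_degree_le (by lia) Polynomial.natDegree_pow_le)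
  have hT0 : T = 0 := by
    by_contra hT0
    have hle := le_natDegree_of_X_pow_dvd_aeval ((isUnit_pentagonalSeries (ZMod 2)).pow 24)
      (mul_ne_zero Polynomial.X_ne_zero hT0) hdvd
    lia
  rw [eq_zero_of_X_mul_derivative_sq_add hT0, map_zero, zero_sub, dvd_neg] at h
  have hX := X_dvd_iff.1 ((dvd_pow_self X (by lia)).trans h)
  simp [constantCoeff_pentagonalSeries] at hX

end DifferentialEquation

section EtaTransformation

theorem eta_neg_inv_pow_eight (τ : ℍ) : eta (-(τ : ℂ))⁻¹ ^ 8 = (τ : ℂ) ^ 4 * eta τ ^ 8 := by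
  have hsqrt {z : ℂ} (hz : z ≠ 0) : Complex.sqrt z ^ 8 = z ^ 4 := by
    rw [sqrt_eq_exp hz, ← Complex.exp_nat_mul,
      show ((8 : ℕ) : ℂ) * (Complex.log z / 2) = (4 : ℕ) * Complex.log z by push_cast; ring,
      Complex.exp_nat_mul, Complex.exp_log hz]
  have h : eta (-(τ : ℂ))⁻¹ = (Complex.sqrt Complex.I)⁻¹ * (Complex.sqrt τ * eta τ) := by
    simpa [neg_div, inv_neg] using eta_comp_eq_csqrt_I_inv τ.2
  rw [h, mul_pow, mul_pow, inv_pow, hsqrt Complex.I_ne_zero, hsqrt τ.ne_zero,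
    Complex.I_pow_four, inv_one, one_mul]

theorem eta_add_one_pow_eight (z : ℂ) :
    eta (z + 1) ^ 8 = Complex.exp (2 * Real.pi * Complex.I / 3) * eta z ^ 8 := by
  have hq (n : ℕ) : eta_q n (z + 1) = eta_q n z := by
    simp [eta_q, qParam, mul_add, Complex.exp_add]
  simp only [eta, hq, mul_pow, ← mul_assoc]
  congr 1
  simp only [qParam, ← Complex.exp_nat_mul, ← Complex.exp_add]
  congr 1
  push_cast
  ring

theorem eta_pow_eight_slash_S :
    (fun τ : ℍ ↦ eta τ ^ 8) ∣[(4 : ℤ)] ModularGroup.S = fun τ : ℍ ↦ eta τ ^ 8 := by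
  ext τ
  rw [SlashInvariantForm.slash_S_apply, eta_neg_inv_pow_eight, zpow_neg]
  exact (mul_inv_eq_iff_eq_mul₀ (zpow_ne_zero 4 τ.ne_zero)).2 (mul_comm _ _)

theorem eta_pow_eight_slash_T :
    (fun τ : ℍ ↦ eta τ ^ 8) ∣[(4 : ℤ)] ModularGroup.T =
      ZMod.stdAddChar (1 : ZMod 3) • fun τ : ℍ ↦ eta τ ^ 8 := by
  have hω : ZMod.stdAddChar (1 : ZMod 3) = Complex.exp (2 * Real.pi * Complex.I / 3) := by
    simpa using ZMod.stdAddChar_coe (N := 3) 1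
  ext τ
  rw [SL_slash_apply, modular_T_smul, ModularGroup.denom_apply, hω]
  simp [ModularGroup.T, add_comm (1 : ℂ), eta_add_one_pow_eight]

/-- The exponent of the cubic character of `SL(2, ℤ)` by which `eta ^ 8` transforms. -/
def etaExponent (γ : SL(2, ℤ)) : ZMod 3 :=
  (γ 0 0 + γ 1 1) * γ 1 0 - γ 0 1 * γ 1 1 * (γ 1 0 ^ 2 - 1)

theorem det_cast_zmod_three (γ : SL(2, ℤ)) :
    (γ 0 0 * γ 1 1 - γ 0 1 * γ 1 0 : ZMod 3) = 1 := by
  exact_mod_cast congrArg (Int.cast : ℤ → ZMod 3) (γ.1.det_fin_two.symm.trans γ.det_coe)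

theorem etaExponent_S_mul (γ : SL(2, ℤ)) :
    etaExponent (ModularGroup.S * γ) = etaExponent γ := by
  have key : ∀ a b c d : ZMod 3, a * d - b * c = 1 →
      (-c + b) * a - -d * b * (a ^ 2 - 1) = (a + d) * c - b * d * (c ^ 2 - 1) := by decide
  simpa [etaExponent, ModularGroup.coe_S, Matrix.mul_apply] using
    key _ _ _ _ (det_cast_zmod_three γ)

theorem etaExponent_T_mul (γ : SL(2, ℤ)) :
    etaExponent (ModularGroup.T * γ) = etaExponent γ + 1 := by
  have key : ∀ a b c d : ZMod 3, a * d - b * c = 1 →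
      (a + c + d) * c - (b + d) * d * (c ^ 2 - 1) =
        (a + d) * c - b * d * (c ^ 2 - 1) + 1 := by decide
  simpa [etaExponent, ModularGroup.coe_T, Matrix.mul_apply] using
    key _ _ _ _ (det_cast_zmod_three γ)

theorem eta_pow_eight_slash (γ : SL(2, ℤ)) :
    (fun τ : ℍ ↦ eta τ ^ 8) ∣[(4 : ℤ)] γ =
      ZMod.stdAddChar (etaExponent γ) • fun τ : ℍ ↦ eta τ ^ 8 := by
  set f : ℍ → ℂ := fun τ ↦ eta τ ^ 8
  have hS (γ : SL(2, ℤ)) : f ∣[(4 : ℤ)] (ModularGroup.S * γ) =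
      ZMod.stdAddChar (etaExponent (ModularGroup.S * γ)) • f ↔
        f ∣[(4 : ℤ)] γ = ZMod.stdAddChar (etaExponent γ) • f := by
    rw [SlashAction.slash_mul, eta_pow_eight_slash_S, etaExponent_S_mul]
  have hT (γ : SL(2, ℤ)) : f ∣[(4 : ℤ)] (ModularGroup.T * γ) =
      ZMod.stdAddChar (etaExponent (ModularGroup.T * γ)) • f ↔
        f ∣[(4 : ℤ)] γ = ZMod.stdAddChar (etaExponent γ) • f := by
    rw [SlashAction.slash_mul, eta_pow_eight_slash_T, etaExponent_T_mul, AddChar.map_add_eq_mul,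
      mul_comm, mul_smul, SL_smul_slash]
    exact smul_right_inj (ZMod.stdAddChar.val_isUnit (1 : ZMod 3)).ne_zero
  have hγ : γ ∈ Subgroup.closure {ModularGroup.S, ModularGroup.T} := by
    simp [SpecialLinearGroup.SL2Z_generators]
  induction hγ using Subgroup.closure_induction_left with
  | one => simp [etaExponent]
  | mul_left x hx y _ ih =>
    rcases hx with rfl | rfl
    exacts [(hS y).2 ih, (hT y).2 ih]
  | inv_mul_cancel x hx y _ ih =>
    rcases hx with rfl | rfl
    exacts [(hS _).1 (by rwa [mul_inv_cancel_left]), (hT _).1 (by rwa [mul_inv_cancel_left])]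

theorem eta_smul_pow_eight {γ : SL(2, ℤ)} (hγ : etaExponent γ = 0) (τ : ℍ) :
    eta (γ • τ : ℍ) ^ 8 = denom γ τ ^ 4 * eta τ ^ 8 := by
  have h := congrFun (eta_pow_eight_slash γ) τ
  rw [hγ, AddChar.map_zero_eq_one, one_smul, SL_slash_apply, zpow_neg, zpow_ofNat] at h
  rw [← h, mul_comm, inv_mul_cancel_right₀ (pow_ne_zero 4 (denom_ne_zero _ _))]

theorem eta_div_pow_eight {ℓ : ℕ} (hℓ : 0 < ℓ) {u v : ℕ} (h : ℓ ∣ 1 + 9 * u * v) (τ : ℍ) :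
    eta (((-(τ : ℂ))⁻¹ + 3 * u) / ℓ) ^ 8 = (τ : ℂ) ^ 4 * eta ((τ + 3 * v) / ℓ) ^ 8 := by
  obtain ⟨b, hb⟩ := h
  have hbℤ : (1 + 9 * u * v : ℤ) = ℓ * b := by exact_mod_cast hb
  have hbℂ : (1 + 9 * u * v : ℂ) = ℓ * b := by exact_mod_cast hb
  have hℓ₀ : (ℓ : ℂ) ≠ 0 := Nat.cast_ne_zero.2 hℓ.ne'
  have hτ₀ := τ.ne_zero
  let γ : SL(2, ℤ) :=
    ⟨!![3 * u, -b; ℓ, -(3 * v)], by rw [Matrix.det_fin_two_of]; linear_combination -hbℤ⟩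
  let σ : ℍ := ⟨(τ + 3 * v) / ℓ, by
    rw [Complex.div_natCast_im]
    simpa using div_pos τ.im_pos (Nat.cast_pos.2 hℓ)⟩
  have hγ : etaExponent γ = 0 := by simp [etaExponent, γ, show (3 : ZMod 3) = 0 from rfl]
  have hσ : ℓ * (σ : ℂ) + -(3 * v) = τ := by
    simp only [σ]
    field_simp
    ring
  have hdenom : denom γ σ = τ := by
    rw [ModularGroup.denom_apply]
    simpa [γ] using hσ
  have hsmul : ((γ • σ : ℍ) : ℂ) = ((-(τ : ℂ))⁻¹ + 3 * u) / ℓ := by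
    have hnum : 3 * u * (σ : ℂ) + -b = (3 * u * τ - 1) / ℓ := by
      rw [eq_div_iff hℓ₀]
      linear_combination 3 * u * hσ + hbℂ
    calc ((γ • σ : ℍ) : ℂ) = (3 * u * σ + -b) / (ℓ * σ + -(3 * v)) := by
          rw [coe_specialLinearGroup_apply]
          simp [γ]
      _ = ((-(τ : ℂ))⁻¹ + 3 * u) / ℓ := by
          rw [hσ, hnum]
          field_simp
          ring
  rw [← hsmul, eta_smul_pow_eight hγ, hdenom]

end EtaTransformation

section EtaTrace

theorem sum_erase_zero_eq_of_dvd_one_add {M : Type*} [AddCommMonoid M] {ℓ c : ℕ} (hℓ : ℓ.Prime)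
    (hc : ¬ ℓ ∣ c) {F G : ℕ → M} (h : ∀ i j, ℓ ∣ 1 + c * i * j → F i = G j) :
    ∑ i ∈ (Finset.range ℓ).erase 0, F i = ∑ i ∈ (Finset.range ℓ).erase 0, G i := by
  have : Fact ℓ.Prime := ⟨hℓ⟩
  have hc' : (c : ZMod ℓ) ≠ 0 := by rwa [Ne, ZMod.natCast_eq_zero_iff]
  have hne {i : ℕ} (hi : i ∈ (Finset.range ℓ).erase 0) : (i : ZMod ℓ) ≠ 0 := by
    rw [Finset.mem_erase, Finset.mem_range] at hi
    rw [Ne, ZMod.natCast_eq_zero_iff]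
    exact fun h ↦ hi.1 (Nat.eq_zero_of_dvd_of_lt h hi.2)
  let σ (i : ℕ) : ℕ := (-(c * (i : ZMod ℓ))⁻¹).val
  have hσ (i : ℕ) : (σ i : ZMod ℓ) = -(c * (i : ZMod ℓ))⁻¹ := ZMod.natCast_zmod_val _
  have hmem : ∀ i ∈ (Finset.range ℓ).erase 0, σ i ∈ (Finset.range ℓ).erase 0 := by
    intro i hi
    rw [Finset.mem_erase, Finset.mem_range, Ne, ZMod.val_eq_zero]
    exact ⟨neg_ne_zero.2 (inv_ne_zero (mul_ne_zero hc' (hne hi))), ZMod.val_lt _⟩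
  have hinv : ∀ i ∈ (Finset.range ℓ).erase 0, σ (σ i) = i := by
    intro i hi
    have hi' := hne hi
    have : -(c * (σ i : ZMod ℓ))⁻¹ = i := by
      rw [hσ]
      field_simp
    simp only [σ] at this ⊢
    rw [this, ZMod.val_cast_of_lt (Finset.mem_range.1 (Finset.mem_of_mem_erase hi))]
  refine Finset.sum_nbij' σ σ hmem hmem hinv hinv fun i hi ↦ h i (σ i) ?_
  rw [← ZMod.natCast_eq_zero_iff]
  have hi' := hne hi
  push_cast
  rw [hσ]
  field_simp
  ring

/-- The trace of `(eta (ℓ z) ^ 8)⁻¹` from level `ℓ` to level one, so `etaTrace ℓ` behaves like a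
form of weight `-4` on `SL(2, ℤ)`. The shifts by multiples of `3` avoid the cubic character
of `eta ^ 8`. -/
noncomputable def etaTrace (ℓ : ℕ) (z : ℂ) : ℂ :=
  (eta (ℓ * z) ^ 8)⁻¹ + ℓ ^ 4 * ∑ i ∈ Finset.range ℓ, (eta ((z + 3 * i) / ℓ) ^ 8)⁻¹

theorem eta_mul_neg_inv_pow_eight {r : ℝ} (hr : 0 < r) (τ : ℍ) :
    eta (r * (-(τ : ℂ))⁻¹) ^ 8 = (τ / r) ^ 4 * eta (τ / r) ^ 8 := by
  have h := eta_neg_inv_pow_eight ⟨τ / r, by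
    rw [Complex.div_ofReal_im]
    exact div_pos τ.im_pos hr⟩
  rwa [coe_mk, ← neg_div, inv_div, div_eq_mul_inv (r : ℂ)] at h

theorem etaTrace_neg_inv {ℓ : ℕ} (hℓ : ℓ.Prime) (h3 : ℓ ≠ 3) (τ : ℍ) :
    etaTrace ℓ (-(τ : ℂ))⁻¹ = ((τ : ℂ) ^ 4)⁻¹ * etaTrace ℓ τ := by
  have hℓ₀ : (ℓ : ℂ) ≠ 0 := Nat.cast_ne_zero.2 hℓ.ne_zero
  have hℓpos : (0 : ℝ) < ℓ := Nat.cast_pos.2 hℓ.pos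
  have hτ₀ := τ.ne_zero
  have h9 : ¬ ℓ ∣ 9 := fun h ↦
    h3 ((Nat.prime_dvd_prime_iff_eq hℓ Nat.prime_three).1 (hℓ.dvd_of_dvd_pow (m := 3) (n := 2) h))
  have hsum : ∑ i ∈ (Finset.range ℓ).erase 0, (eta (((-(τ : ℂ))⁻¹ + 3 * i) / ℓ) ^ 8)⁻¹ =
      ((τ : ℂ) ^ 4)⁻¹ * ∑ i ∈ (Finset.range ℓ).erase 0, (eta ((τ + 3 * i) / ℓ) ^ 8)⁻¹ := by
    rw [Finset.mul_sum]
    exact sum_erase_zero_eq_of_dvd_one_add hℓ h9 fun u v h ↦ by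
      rw [eta_div_pow_eight hℓ.pos h, mul_inv]
  have hmul : eta (ℓ * (-(τ : ℂ))⁻¹) ^ 8 = (τ / ℓ) ^ 4 * eta (τ / ℓ) ^ 8 := by
    simpa using eta_mul_neg_inv_pow_eight hℓpos τ
  have hdiv : eta ((-(τ : ℂ))⁻¹ / ℓ) ^ 8 = (ℓ * τ) ^ 4 * eta (ℓ * τ) ^ 8 := by
    simpa [div_eq_inv_mul, mul_comm] using eta_mul_neg_inv_pow_eight (inv_pos.2 hℓpos) τ
  have h0 : 0 ∈ Finset.range ℓ := Finset.mem_range.2 hℓ.pos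
  rw [etaTrace, etaTrace, ← Finset.add_sum_erase _ _ h0, ← Finset.add_sum_erase _ _ h0, hsum]
  simp only [Nat.cast_zero, mul_zero, add_zero, hmul, hdiv, mul_inv, div_pow, mul_pow, inv_div]
  field_simp
  ring

theorem eta_pow_mul_etaTrace_neg_inv {ℓ w : ℕ} (hℓ : ℓ.Prime) (h3 : ℓ ≠ 3) (hw : ℓ = w + 1)
    (τ : ℍ) : eta (-(τ : ℂ))⁻¹ ^ (8 * ℓ) * etaTrace ℓ (-(τ : ℂ))⁻¹ =
      (τ : ℂ) ^ (4 * w : ℤ) * (eta τ ^ (8 * ℓ) * etaTrace ℓ τ) := by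
  have hτ₀ := τ.ne_zero
  have hpow : (τ : ℂ) ^ (4 * w : ℤ) * (τ : ℂ) ^ 4 = (τ : ℂ) ^ (4 * ℓ) := by
    rw [hw, mul_add, pow_add]
    exact_mod_cast rfl
  rw [etaTrace_neg_inv hℓ h3, pow_mul, eta_neg_inv_pow_eight, mul_pow, ← pow_mul, ← pow_mul,
    ← hpow]
  field_simp

theorem eta_pow_mul_inv_eta_mul_pow (ℓ : ℕ) (z : ℂ) :
    eta z ^ (8 * ℓ) * (eta (ℓ * z) ^ 8)⁻¹ =
      (∏' n, (1 - eta_q n z)) ^ (8 * ℓ) * ((∏' n, (1 - eta_q n (ℓ * z))) ^ 8)⁻¹ := by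
  have hq : qParam 24 z ^ (8 * ℓ) = qParam 24 (ℓ * z) ^ 8 := by
    simp only [qParam, ← Complex.exp_nat_mul]
    push_cast
    ring_nf
  have hq₀ : qParam 24 (ℓ * z) ≠ 0 := Complex.exp_ne_zero _
  rw [eta, eta, mul_pow, mul_pow, hq]
  field_simp

theorem eta_pow_mul_inv_eta_div_pow {ℓ D : ℕ} (hℓ : ℓ ≠ 0) (hD : ℓ ^ 2 = 3 * D + 1) (z : ℂ)
    (i : ℕ) : eta z ^ (8 * ℓ) * (eta ((z + 3 * i) / ℓ) ^ 8)⁻¹ =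
      (∏' n, (1 - eta_q n z)) ^ (8 * ℓ) * (qParam 1 ((z + 3 * i) / ℓ) ^ D *
        ((∏' n, (1 - eta_q n ((z + 3 * i) / ℓ))) ^ 8)⁻¹) := by
  have hℓ₀ : (ℓ : ℂ) ≠ 0 := Nat.cast_ne_zero.2 hℓ
  obtain ⟨w, hw⟩ : ∃ w, w = (z + 3 * i) / ℓ := ⟨_, rfl⟩
  have hz : z = ℓ * w - 3 * i := by
    rw [hw]
    field_simp
    ring
  have hq : qParam 24 z ^ (8 * ℓ) = qParam 1 w ^ D * qParam 24 w ^ 8 := by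
    have hDℂ : (ℓ : ℂ) ^ 2 = 3 * D + 1 := by exact_mod_cast hD
    simp only [qParam, ← Complex.exp_nat_mul, ← Complex.exp_add]
    rw [Complex.exp_eq_exp_iff_exists_int]
    refine ⟨-(ℓ * i), ?_⟩
    rw [hz]
    push_cast
    linear_combination 2 * Real.pi * Complex.I * w / 3 * hDℂ
  have hq₀ : qParam 24 w ≠ 0 := Complex.exp_ne_zero _
  rw [← hw, eta, eta, mul_pow, mul_pow, hq]
  field_simp

/-- The power series of `eta ^ (8 * ℓ) * etaTrace ℓ`, where `ℓ ^ 2 = 3 * D + 1`. -/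
noncomputable def etaTraceSeries (R : Type*) [CommRing R] (ℓ : ℕ) [NeZero ℓ] (D : ℕ) : R⟦X⟧ :=
  pentagonalSeries R ^ (8 * ℓ) * ((partitionSeries R ^ 8).expand ℓ (NeZero.ne ℓ) +
    (ℓ : R⟦X⟧) ^ 5 * atkinU ℓ (X ^ D * partitionSeries R ^ 8))

theorem map_etaTraceSeries {R S : Type*} [CommRing R] [CommRing S] (f : R →+* S) (ℓ : ℕ)
    [NeZero ℓ] (D : ℕ) : map f (etaTraceSeries R ℓ D) = etaTraceSeries S ℓ D := by
  simp only [etaTraceSeries, map_mul, map_add, map_pow, map_natCast, map_atkinU, map_X,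
    map_expand, map_pentagonalSeries, map_partitionSeries]

theorem hasQExpansion_eta_pow_mul_etaTrace {ℓ D : ℕ} [NeZero ℓ] (hℓ : Nat.Coprime 3 ℓ)
    (hD : ℓ ^ 2 = 3 * D + 1) :
    HasQExpansion (fun z ↦ eta z ^ (8 * ℓ) * etaTrace ℓ z) (etaTraceSeries ℂ ℓ D) := by
  have hpent := hasQExpansion_tprod_one_sub_eta_q
  have hpart := (hpent.inv (fun z hz ↦ eta_tprod_ne_zero hz)
    ((mul_comm _ _).trans (partitionSeries_mul_pentagonalSeries ℂ))).pow 8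
  have hsum := ((HasQExpansion.qParam_pow D).mul hpart).sum_div (NeZero.ne ℓ) hℓ
  convert (((hpent.pow (8 * ℓ)).mul ((hpart.expand (NeZero.ne ℓ)).add
    (hsum.const_mul (ℓ ^ 4)))).congr fun z _ ↦ ?_) using 1
  · rw [etaTraceSeries, map_pow C, map_natCast C]
    ring
  · simp only [etaTrace, mul_add, mul_left_comm _ ((ℓ : ℂ) ^ 4), Finset.mul_sum,
      eta_pow_mul_inv_eta_mul_pow, eta_pow_mul_inv_eta_div_pow (NeZero.ne ℓ) hD, inv_pow,
      Nat.cast_ofNat]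

theorem exists_modularForm_qExpansion_eq_etaTraceSeries {ℓ w D : ℕ} [NeZero ℓ] (hℓ : ℓ.Prime)
    (h3 : ℓ ≠ 3) (hw : ℓ = w + 1) (hD : ℓ ^ 2 = 3 * D + 1) :
    ∃ f : ModularForm 𝒮ℒ (4 * w), qExpansion 1 f = etaTraceSeries ℂ ℓ D :=
  (hasQExpansion_eta_pow_mul_etaTrace ((Nat.coprime_primes Nat.prime_three hℓ).2 h3.symm)
    hD).exists_modularForm (eta_pow_mul_etaTrace_neg_inv hℓ h3 hw)

theorem etaTraceSeries_zmod_two {ℓ d : ℕ} [NeZero ℓ] (hℓ : Odd ℓ) :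
    etaTraceSeries (ZMod 2) ℓ (8 * d) = (pentagonalSeries (ZMod 2) ^ ℓ *
      ((partitionSeries (ZMod 2)).expand ℓ (NeZero.ne ℓ) +
        atkinU ℓ (X ^ d * partitionSeries (ZMod 2)))) ^ 2 ^ 3 := by
  have hcast : (ℓ : (ZMod 2)⟦X⟧) = 1 :=
    natCast_eq_one_of_odd_of_two_eq_zero hℓ CharTwo.two_eq_zero
  rw [mul_pow, add_pow_char_pow, pow_prime_pow_eq_expand 3 (atkinU ℓ _), ← atkinU_expand
    (hℓ.coprime_two_right.pow_right 3), ← pow_prime_pow_eq_expand, etaTraceSeries, hcast, one_pow,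
    one_mul, map_pow]
  ring_nf

end EtaTrace

section Parity

theorem atkinU_X_pow_mul {R : Type*} [Semiring R] {ℓ δ d k : ℕ} (hδ : δ < ℓ) (hk : ℓ * k = δ + d)
    (a : R⟦X⟧) : atkinU ℓ (X ^ d * a) = X ^ k * .mk fun m ↦ coeff (ℓ * m + δ) a := by
  ext m
  rw [atkinU, coeff_mk, coeff_X_pow_mul', coeff_X_pow_mul']
  rcases lt_or_ge m k with hm | hm
  · have : ℓ * (m + 1) ≤ ℓ * k := Nat.mul_le_mul_left ℓ hm
    rw [if_neg (by lia), if_neg hm.not_ge]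
  · obtain ⟨j, rfl⟩ := Nat.exists_eq_add_of_le hm
    rw [if_pos (by lia), if_pos hm, coeff_mk]
    rw [Nat.add_sub_cancel_left, show ℓ * (k + j) - d = ℓ * j + δ by rw [mul_add, hk]; lia]

theorem X_pow_dvd_expand_sub_C {R : Type*} [CommRing R] {n : ℕ} (hn : n ≠ 0) (a : R⟦X⟧) :
    X ^ n ∣ a.expand n hn - C (constantCoeff a) := by
  have h : X ∣ a - C (constantCoeff a) := by simp [X_dvd_iff]
  simpa [expand_C] using map_dvd (expand n hn) h

theorem exists_aeval_deltaSeries_eq_pow_mul_partitionSeries {ℓ d : ℕ} [NeZero ℓ] (hℓ : ℓ.Prime)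
    (hd : ℓ ^ 2 = 24 * d + 1) :
    ∃ S : (ZMod 2)[X], 24 * S.natDegree < ℓ ∧
      Polynomial.aeval (deltaSeries (ZMod 2)) S = pentagonalSeries (ZMod 2) ^ ℓ *
        ((partitionSeries (ZMod 2)).expand ℓ (NeZero.ne ℓ) +
          atkinU ℓ (X ^ d * partitionSeries (ZMod 2))) := by
  have hodd : Odd ℓ := Nat.Odd.of_mul_left (by rw [← pow_two, hd]; exact ⟨12 * d, by ring⟩)
  have h3 : ℓ ≠ 3 := by rintro rfl; lia
  obtain ⟨w, rfl⟩ := Nat.exists_eq_add_one.2 hℓ.pos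
  obtain ⟨f, hf⟩ := exists_modularForm_qExpansion_eq_etaTraceSeries (D := 8 * d) hℓ h3 rfl
    (by lia)
  obtain ⟨R, hRdeg, hR⟩ := exists_aeval_deltaSeries_eq f
    (hf.trans (map_etaTraceSeries (Int.castRingHom ℂ) _ _).symm)
  rw [map_etaTraceSeries, etaTraceSeries_zmod_two hodd] at hR
  obtain ⟨S, rfl, hS⟩ := exists_eq_pow_pow_of_aeval_eq_pow_pow
    ((isUnit_pentagonalSeries (ZMod 2)).pow 24) 3 hR
  rw [Polynomial.natDegree_pow] at hRdeg
  exact ⟨S, by lia, hS⟩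

theorem X_pow_dvd_mul_expand_add_atkinU_sub {ℓ δ d k M N : ℕ} [NeZero ℓ] (hδ : δ < ℓ)
    (hk : ℓ * k = δ + d) (hNℓ : N ≤ ℓ) (hNk : N ≤ k + M)
    (heven : ∀ m < M, Even (partitionFn (ℓ * m + δ))) (e : (ZMod 2)⟦X⟧) :
    X ^ N ∣ e * ((partitionSeries (ZMod 2)).expand ℓ (NeZero.ne ℓ) +
      atkinU ℓ (X ^ d * partitionSeries (ZMod 2))) - e := by
  have hexpand : X ^ N ∣ (partitionSeries (ZMod 2)).expand ℓ (NeZero.ne ℓ) - 1 := by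
    simpa [constantCoeff_partitionSeries] using (pow_dvd_pow X hNℓ).trans
      (X_pow_dvd_expand_sub_C (NeZero.ne ℓ) (partitionSeries (ZMod 2)))
  have hatkinU : X ^ N ∣ atkinU ℓ (X ^ d * partitionSeries (ZMod 2)) := by
    rw [atkinU_X_pow_mul hδ hk]
    refine (pow_dvd_pow X hNk).trans ?_
    rw [pow_add]
    refine mul_dvd_mul_left _ (X_pow_dvd_iff.2 ?_)
    intro m hm
    simpa [partitionSeries] using (ZMod.natCast_eq_zero_iff_even).2 (heven m hm)
  convert (hexpand.add hatkinU).mul_left e using 1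
  ring

theorem sq_mod_twentyFour_of_coprime {n : ℕ} (hn : n.Coprime 24) : n ^ 2 % 24 = 1 := by
  have key : ∀ r < 24, r.Coprime 24 → r ^ 2 % 24 = 1 := by decide
  rw [Nat.pow_mod]
  exact key _ (n.mod_lt (by norm_num)) (by rwa [Nat.Coprime, ← Nat.gcd_rec, Nat.gcd_comm])

theorem exists_mul_eq_add_of_sq_eq {ℓ δ d : ℕ} (hd : ℓ ^ 2 = 24 * d + 1)
    (hδ : 24 * δ % ℓ = 1) : ∃ k, ℓ * k = δ + d ∧ ℓ ≤ 24 * k := by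
  have h24 : 24 * (δ + d) = ℓ * (24 * δ / ℓ + ℓ) := by
    linarith [Nat.div_add_mod (24 * δ) ℓ, pow_two ℓ, mul_add ℓ (24 * δ / ℓ) ℓ]
  have hcop : ℓ.Coprime 24 := (Nat.coprime_pow_left_iff two_pos ℓ 24).1 (by simp [hd])
  obtain ⟨k, hk⟩ : ℓ ∣ δ + d := hcop.dvd_of_dvd_mul_left ⟨_, h24⟩
  have hℓ : 0 < ℓ := Nat.pos_of_ne_zero (by rintro rfl; lia)
  refine ⟨k, hk.symm, ?_⟩
  have : 24 * k = 24 * δ / ℓ + ℓ := Nat.eq_of_mul_eq_mul_left hℓ (by rw [← h24, hk]; ring)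
  lia

end Parity

theorem odd_partition_value_small_general {ℓ δ : ℕ} (hℓ : ℓ.Prime) (hδℓ : δ < ℓ)
    (hδ : 24 * δ % ℓ = 1) : ∃ m : ℕ, 24 * m < ℓ ∧ Odd (partitionFn (ℓ * m + δ)) := by
  by_contra! heven
  simp only [Nat.not_odd_iff_even] at heven
  have : NeZero ℓ := ⟨hℓ.ne_zero⟩
  have hcop : Nat.Coprime 24 ℓ :=
    Nat.coprime_of_mul_modEq_one δ (hδ.trans (Nat.mod_eq_of_lt hℓ.one_lt).symm)
  have hsq := sq_mod_twentyFour_of_coprime hcop.symm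
  obtain ⟨d, hd⟩ : ∃ d, ℓ ^ 2 = 24 * d + 1 := ⟨ℓ ^ 2 / 24, by lia⟩
  obtain ⟨k, hk, hℓk⟩ := exists_mul_eq_add_of_sq_eq hd hδ
  obtain ⟨S, hSdeg, hS⟩ := exists_aeval_deltaSeries_eq_pow_mul_partitionSeries hℓ hd
  obtain ⟨M, hM, hM'⟩ : ∃ M, 24 * M < ℓ + 24 ∧ ℓ ≤ 24 * M := ⟨(ℓ + 23) / 24, by lia, by lia⟩
  have hne : ℓ ≠ 2 := by rintro rfl; revert hcop; decide
  have hdvd := X_pow_dvd_mul_expand_add_atkinU_sub (M := M) (N := 2 * M) hδℓ hk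
    (by have := hℓ.two_le; lia) (by lia) (fun m hm ↦ heven m (by lia))
    (pentagonalSeries (ZMod 2) ^ ℓ)
  rw [← hS] at hdvd
  have := le_of_X_pow_dvd_aeval_deltaSeries_sub (hℓ.odd_of_ne_two hne) hdvd
  lia

/-- For every prime ℓ ≥ 5, there is m with 0 ≤ m < (ℓ² − 1)/24 for which
p(ℓm + δ_ℓ) is odd. -/
theorem odd_partition_value_small (ℓ : ℕ) (hℓ : ℓ.Prime) (h5 : 5 ≤ ℓ)
    (δ : ℕ) (hδ0 : 0 < δ) (hδℓ : δ < ℓ) (hδ : 24 * δ % ℓ = 1) :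
    ∃ m : ℕ, m < (ℓ ^ 2 - 1) / 24 ∧ Odd (partitionFn (ℓ * m + δ)) := by
  obtain ⟨m, hm, hodd⟩ := odd_partition_value_small_general hℓ hδℓ hδ
  have hm' : (m + 1) * 24 + 1 ≤ ℓ ^ 2 := by
    rcases m.eq_zero_or_pos with rfl | hpos <;> nlinarith
  exact ⟨m, (Nat.le_div_iff_mul_le (by norm_num)).2 (Nat.le_sub_of_add_le hm'), hodd⟩
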